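/- (Uniform weighted bound for the marginals of admissible hard-sphere initial data.) Let β₀ > 0, μ₀ ∈ ℝ, γ > 0 and let f^in : ℝ³ × ℝ³ → ℝ be continuous with 0 ≤ f^in(x,v) ≤ e^{−μ₀ − β₀|v|²/2} and ∬_{ℝ³×ℝ³} f^in(x,v) dx dv = 1. For N ≥ 1 set r := (1/2)√(γ/N), Z_N := ∫_{Γ^r_N} ∏_{i=1}^N f^in(x_i,v_i) dX_N dV_N, and (when Z_N > 0) F^in_N := Z_N^{-1} 1_{Ω^r_N}(X_N) ∏_{i=1}^N f^in(x_i,v_i), with marginals F^in_{N:k}(X_k,V_k) := ∫_{(ℝ³)^{N−k}×(ℝ³)^{N−k}} F^in_N(X_N,V_N) dx_{k+1}…dx_N dv_{k+1}…dv_N for 1 ≤ k ≤ N and F^in_{N:k} := 0 for k > N. Then there exists N₀ such that Z_N > 0 for all N ≥ N₀, and there exists μ₁ ≤ μ₀ such that sup_{N ≥ N₀} ‖(F^in_{N:k})_{k≥1}‖_{μ₁,β₀} < ∞. -/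

import Mathlib

open MeasureTheory Real
open scoped ENNReal

noncomputable section

abbrev R3 : Type := EuclideanSpace ℝ (Fin 3)

/-- The weighted norm `|g|_{k,β} := ess sup |g(X_k,V_k)| exp(β|V_k|²/2)`, valued in `ℝ≥0∞`. -/
noncomputable def wnorm (k : ℕ) (β : ℝ) (g : (Fin k → R3) → (Fin k → R3) → ℝ) : ℝ≥0∞ :=
  essSup (fun Z : (Fin k → R3) × (Fin k → R3) =>
    ENNReal.ofReal (|g Z.1 Z.2| * exp (β * (∑ j, ‖Z.2 j‖ ^ 2) / 2))) volume

/-- The norm `‖(g_n)_{n≥1}‖_{μ,β} := sup_{n ≥ 1} |g_n|_{n,β} e^{μn}`, valued in `ℝ≥0∞`. -/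
noncomputable def seqnorm (μ β : ℝ)
    (g : (n : ℕ) → (Fin n → R3) → (Fin n → R3) → ℝ) : ℝ≥0∞ :=
  ⨆ n : ℕ, wnorm (n + 1) β (g (n + 1)) * ENNReal.ofReal (exp (μ * (n + 1)))

/-- The set `Ω^r_m` of admissible positions of `m` hard spheres of radius `r`. -/
def OmegaSet (m : ℕ) (r : ℝ) : Set (Fin m → R3) :=
  {X | ∀ i j : Fin m, i ≠ j → 2 * r < dist (X i) (X j)}

/-- The Boltzmann–Grad radius `r = (1/2)√(γ/N)`. -/
noncomputable def rBG (γ : ℝ) (N : ℕ) : ℝ := (1 / 2) * Real.sqrt (γ / N)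

/-- The normalization constant `Z_N = ∫_{Γ^r_N} ∏ f^in(x_i,v_i) dX_N dV_N`. -/
noncomputable def ZN (f : R3 → R3 → ℝ) (N : ℕ) (r : ℝ) : ℝ :=
  ∫ Z : (Fin N → R3) × (Fin N → R3),
    (OmegaSet N r).indicator (fun _ => (1 : ℝ)) Z.1 * ∏ i, f (Z.1 i) (Z.2 i)

/-- The admissible `N`-particle initial distribution
`F^in_N = Z_N⁻¹ 1_{Ω^r_N} ∏ f^in(x_i,v_i)`. -/
noncomputable def FinitN (f : R3 → R3 → ℝ) (N : ℕ) (r : ℝ) (X V : Fin N → R3) : ℝ :=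
  (ZN f N r)⁻¹ * (OmegaSet N r).indicator (fun _ => (1 : ℝ)) X * ∏ i, f (X i) (V i)

/-- Completion of a `k`-tuple by an `(N-k)`-tuple into an `N`-tuple. -/
def combine {N k : ℕ} (hk : k ≤ N) (X : Fin k → R3) (W : Fin (N - k) → R3) : Fin N → R3 :=
  fun i => if h : (i : ℕ) < k then X ⟨i, h⟩ else W ⟨(i : ℕ) - k, by have := i.isLt; omega⟩

/-- The `k`-th marginal of an `N`-particle distribution. -/
noncomputable def marginal (N k : ℕ) (hk : k ≤ N) (F : (Fin N → R3) → (Fin N → R3) → ℝ)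
    (X V : Fin k → R3) : ℝ :=
  ∫ W : (Fin (N - k) → R3) × (Fin (N - k) → R3), F (combine hk X W.1) (combine hk V W.2)

/-- The family of all marginals of an `N`-particle distribution (`0` for `k > N`). -/
noncomputable def margFam (N : ℕ) (F : (Fin N → R3) → (Fin N → R3) → ℝ) :
    (k : ℕ) → (Fin k → R3) → (Fin k → R3) → ℝ :=
  fun k => if hk : k ≤ N then marginal N k hk F else fun _ _ => 0

/-- The unnormalized hard-sphere weight `1_{Ω^r_m} ∏ g(z_i)`, valued in `ℝ≥0∞`. -/
def hardSphereWeight (g : R3 × R3 → ℝ≥0∞) (r : ℝ) (m : ℕ) (Z : Fin m → R3 × R3) : ℝ≥0∞ :=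
  (OmegaSet m r).indicator (fun _ => 1) (fun i => (Z i).1) * ∏ i, g (Z i)

/-- The hard-sphere partition function, valued in `ℝ≥0∞`. -/
def partitionFunction (g : R3 × R3 → ℝ≥0∞) (r : ℝ) (m : ℕ) : ℝ≥0∞ :=
  ∫⁻ Z, hardSphereWeight g r m Z

/-- One-particle phase points whose position is admissible with respect to those of `Z`. -/
def admissibleSet {m : ℕ} (r : ℝ) (Z : Fin m → R3 × R3) : Set (R3 × R3) :=
  {z | ∀ i, 2 * r < dist z.1 (Z i).1}

lemma isOpen_omegaSet (m : ℕ) (r : ℝ) : IsOpen (OmegaSet m r) := by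
  simp only [OmegaSet, Set.ofPred_forall]
  refine isOpen_iInter_of_finite fun i => isOpen_iInter_of_finite fun j =>
    isOpen_iInter_of_finite fun _ => isOpen_lt (by fun_prop) (by fun_prop)

lemma isOpen_admissibleSet {m : ℕ} (r : ℝ) (Z : Fin m → R3 × R3) :
    IsOpen (admissibleSet r Z) := by
  simp only [admissibleSet, Set.ofPred_forall]
  exact isOpen_iInter_of_finite fun i => isOpen_lt (by fun_prop) (by fun_prop)

lemma measurable_hardSphereWeight {g : R3 × R3 → ℝ≥0∞} (hg : Measurable g) (r : ℝ) (m : ℕ) :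
    Measurable (hardSphereWeight g r m) := by
  unfold hardSphereWeight
  refine Measurable.mul ?_ (Finset.measurable_prod _ fun i _ => hg.comp (measurable_pi_apply i))
  exact (measurable_const.indicator (isOpen_omegaSet m r).measurableSet).comp (by fun_prop)

lemma hardSphereWeight_cons (g : R3 × R3 → ℝ≥0∞) (r : ℝ) (m : ℕ) (z : R3 × R3)
    (Z : Fin m → R3 × R3) :
    hardSphereWeight g r (m + 1) (Fin.cons z Z : Fin (m + 1) → R3 × R3) =
      hardSphereWeight g r m Z * (admissibleSet r Z).indicator g z := by
  have hmem : (fun i => ((Fin.cons z Z : Fin (m + 1) → R3 × R3) i).1) ∈ OmegaSet (m + 1) r ↔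
      (fun i => (Z i).1) ∈ OmegaSet m r ∧ z ∈ admissibleSet r Z := by
    constructor
    · intro h
      refine ⟨fun i j hij => ?_, fun i => ?_⟩
      · simpa using h i.succ j.succ (by simpa using hij)
      · simpa using h 0 i.succ (Fin.succ_ne_zero i).symm
    · rintro ⟨h₁, h₂⟩ i j
      induction i using Fin.cases with
      | zero =>
        induction j using Fin.cases with
        | zero => simp
        | succ j => intro _; simpa using h₂ j
      | succ i =>
        induction j using Fin.cases with
        | zero => intro _; simpa [dist_comm] using h₂ i
        | succ j => intro hij; simpa using h₁ i j (by simpa using hij)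
  unfold hardSphereWeight
  by_cases h₁ : (fun i => (Z i).1) ∈ OmegaSet m r
  · by_cases h₂ : z ∈ admissibleSet r Z
    · rw [Set.indicator_of_mem (hmem.2 ⟨h₁, h₂⟩), Set.indicator_of_mem h₁,
        Set.indicator_of_mem h₂, Fin.prod_univ_succ]
      simp [mul_comm]
    · rw [Set.indicator_of_notMem (fun h => h₂ (hmem.1 h).2), Set.indicator_of_notMem h₂]
      simp
  · rw [Set.indicator_of_notMem (fun h => h₁ (hmem.1 h).1), Set.indicator_of_notMem h₁]
    simp

lemma partitionFunction_zero (g : R3 × R3 → ℝ≥0∞) (r : ℝ) : partitionFunction g r 0 = 1 := by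
  have h (Z : Fin 0 → R3 × R3) : hardSphereWeight g r 0 Z = 1 := by
    simp [hardSphereWeight, OmegaSet]
  simp [partitionFunction, h, volume_pi]

lemma partitionFunction_succ {g : R3 × R3 → ℝ≥0∞} (hg : Measurable g) (r : ℝ) (m : ℕ) :
    partitionFunction g r (m + 1) =
      ∫⁻ Z, hardSphereWeight g r m Z * ∫⁻ z in admissibleSet r Z, g z := by
  have hp : MeasurePreserving
      (fun p : (R3 × R3) × (Fin m → R3 × R3) => (Fin.cons p.1 p.2 : Fin (m + 1) → R3 × R3))
      (volume.prod volume) volume := by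
    convert! (volume_preserving_piFinSuccAbove (fun _ : Fin (m + 1) => R3 × R3) 0).symm using 1
    funext p
    exact (Fin.insertNth_zero' p.1 p.2).symm
  have hσ : SigmaFinite (volume : Measure (R3 × R3)) := inferInstance
  have hm := measurable_hardSphereWeight hg r (m + 1)
  rw [partitionFunction, ← hp.lintegral_comp hm]
  refine (lintegral_prod_symm _ (hm.comp hp.measurable).aemeasurable).trans ?_
  refine lintegral_congr fun Z => ?_
  rw [← lintegral_indicator (isOpen_admissibleSet r Z).measurableSet,
    ← lintegral_const_mul _ (hg.indicator (isOpen_admissibleSet r Z).measurableSet)]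
  refine lintegral_congr fun z => ?_
  exact hardSphereWeight_cons g r m z Z

lemma partitionFunction_le_one {g : R3 × R3 → ℝ≥0∞} (hg : Measurable g)
    (hg1 : ∫⁻ z, g z = 1) (r : ℝ) (m : ℕ) : partitionFunction g r m ≤ 1 := by
  induction m with
  | zero => exact (partitionFunction_zero g r).le
  | succ m ih =>
    rw [partitionFunction_succ hg]
    refine le_trans (lintegral_mono fun Z => ?_) ih
    exact mul_le_of_le_one_right' ((setLIntegral_le_lintegral _ _).trans hg1.le)

/-- If a ball of radius `2r` in position space carries mass at most `κ`, then `m` spheres leave at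
least the mass `1 - m κ` admissible. -/
lemma one_le_setLIntegral_admissibleSet_add {g : R3 × R3 → ℝ≥0∞} (hg1 : ∫⁻ z, g z = 1)
    {r : ℝ} {κ : ℝ≥0∞} (hκ : ∀ y, ∫⁻ z in Metric.closedBall y (2 * r) ×ˢ Set.univ, g z ≤ κ)
    {m : ℕ} (Z : Fin m → R3 × R3) :
    1 ≤ (∫⁻ z in admissibleSet r Z, g z) + m * κ := by
  have hcompl : (admissibleSet r Z)ᶜ ⊆
      ⋃ i, Metric.closedBall (Z i).1 (2 * r) ×ˢ (Set.univ : Set R3) := by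
    intro z hz
    simpa [admissibleSet] using hz
  rw [← hg1, ← lintegral_add_compl g (isOpen_admissibleSet r Z).measurableSet]
  gcongr
  calc ∫⁻ z in (admissibleSet r Z)ᶜ, g z
      ≤ ∫⁻ z in ⋃ i, Metric.closedBall (Z i).1 (2 * r) ×ˢ (Set.univ : Set R3), g z :=
        lintegral_mono_set hcompl
    _ ≤ ∑' i, ∫⁻ z in Metric.closedBall (Z i).1 (2 * r) ×ˢ (Set.univ : Set R3), g z :=
        lintegral_iUnion_le _ _
    _ ≤ ∑' _ : Fin m, κ := ENNReal.tsum_le_tsum fun i => hκ _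
    _ = m * κ := by simp

lemma partitionFunction_le_two_mul_succ {g : R3 × R3 → ℝ≥0∞} (hg : Measurable g)
    (hg1 : ∫⁻ z, g z = 1) {r : ℝ} {κ : ℝ≥0∞}
    (hκ : ∀ y, ∫⁻ z in Metric.closedBall y (2 * r) ×ˢ Set.univ, g z ≤ κ)
    {m : ℕ} (hm : m * κ ≤ 2⁻¹) :
    partitionFunction g r m ≤ 2 * partitionFunction g r (m + 1) := by
  rw [partitionFunction_succ hg, partitionFunction, ← lintegral_const_mul' _ _ (by simp)]
  refine lintegral_mono fun Z => ?_
  have h : 2⁻¹ ≤ ∫⁻ z in admissibleSet r Z, g z := by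
    have h₁ := (one_le_setLIntegral_admissibleSet_add hg1 hκ Z).trans
      (add_le_add_right hm _)
    rw [← ENNReal.inv_two_add_inv_two] at h₁
    exact (ENNReal.add_le_add_iff_right (by simp)).1 h₁
  calc hardSphereWeight g r m Z = 2 * (hardSphereWeight g r m Z * 2⁻¹) := by
        rw [mul_left_comm, ENNReal.mul_inv_cancel (by simp) (by simp), mul_one]
    _ ≤ _ := by gcongr

lemma partitionFunction_le_two_pow_mul_add {g : R3 × R3 → ℝ≥0∞} (hg : Measurable g)
    (hg1 : ∫⁻ z, g z = 1) {r : ℝ} {κ : ℝ≥0∞}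
    (hκ : ∀ y, ∫⁻ z in Metric.closedBall y (2 * r) ×ˢ Set.univ, g z ≤ κ)
    (m k : ℕ) (hmk : (m + k : ℕ) * κ ≤ 2⁻¹) :
    partitionFunction g r m ≤ 2 ^ k * partitionFunction g r (m + k) := by
  induction k with
  | zero => simp
  | succ k ih =>
    have hk : (m + k : ℕ) * κ ≤ 2⁻¹ := le_trans (by gcongr; omega) hmk
    calc partitionFunction g r m ≤ 2 ^ k * partitionFunction g r (m + k) := ih hk
      _ ≤ 2 ^ k * (2 * partitionFunction g r (m + k + 1)) := by
        gcongr
        exact partitionFunction_le_two_mul_succ hg hg1 hκ hk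
      _ = _ := by rw [pow_succ, mul_assoc, add_assoc]

lemma lintegral_hardSphereWeight_prod {g : R3 × R3 → ℝ≥0∞} (hg : Measurable g) (r : ℝ) (m : ℕ) :
    ∫⁻ W : (Fin m → R3) × (Fin m → R3), hardSphereWeight g r m (fun i => (W.1 i, W.2 i)) =
      partitionFunction g r m :=
  (volume_measurePreserving_arrowProdEquivProdArrow R3 R3 (Fin m)).symm.lintegral_comp
    (measurable_hardSphereWeight hg r m)

lemma ofReal_indicator_mul_prod {f : R3 → R3 → ℝ} (hf : ∀ x v, 0 ≤ f x v) (r : ℝ) (m : ℕ)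
    (X V : Fin m → R3) :
    ENNReal.ofReal ((OmegaSet m r).indicator (fun _ => (1 : ℝ)) X * ∏ i, f (X i) (V i)) =
      hardSphereWeight (fun z => ENNReal.ofReal (f z.1 z.2)) r m (fun i => (X i, V i)) := by
  rw [ENNReal.ofReal_mul (Set.indicator_nonneg (fun _ _ => zero_le_one) _),
    ENNReal.ofReal_prod_of_nonneg fun i _ => hf _ _, hardSphereWeight]
  congr 1
  by_cases h : X ∈ OmegaSet m r <;> simp [h]

lemma ofReal_ZN {f : R3 → R3 → ℝ} (hf_cont : Continuous (Function.uncurry f))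
    (hf : ∀ x v, 0 ≤ f x v)
    (hg1 : ∫⁻ z : R3 × R3, ENNReal.ofReal (f z.1 z.2) = 1) (N : ℕ) (r : ℝ) :
    ENNReal.ofReal (ZN f N r) =
      partitionFunction (fun z => ENNReal.ofReal (f z.1 z.2)) r N := by
  have hg : Measurable fun z : R3 × R3 => ENNReal.ofReal (f z.1 z.2) :=
    (ENNReal.continuous_ofReal.comp hf_cont).measurable
  rw [ZN, integral_eq_lintegral_of_nonneg_ae]
  · simp_rw [ofReal_indicator_mul_prod hf]
    rw [lintegral_hardSphereWeight_prod hg, ENNReal.ofReal_toReal]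
    exact ne_top_of_le_ne_top (by simp) (partitionFunction_le_one hg hg1 r N)
  · exact .of_forall fun Z => mul_nonneg (Set.indicator_nonneg (fun _ _ => zero_le_one) _)
      (Finset.prod_nonneg fun _ _ => hf _ _)
  · refine Measurable.aestronglyMeasurable (Measurable.mul ?_ ?_)
    · exact (measurable_const.indicator (isOpen_omegaSet N r).measurableSet).comp measurable_fst
    · refine Finset.measurable_prod _ fun i _ => ?_
      exact hf_cont.measurable.comp (by fun_prop : Measurable
        fun Z : (Fin N → R3) × (Fin N → R3) => (Z.1 i, Z.2 i))

lemma prod_combine {N k : ℕ} (hk : k ≤ N) (f : R3 → R3 → ℝ) (X V : Fin k → R3)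
    (W U : Fin (N - k) → R3) :
    ∏ i, f (combine hk X W i) (combine hk V U i) =
      (∏ i, f (X i) (V i)) * ∏ i, f (W i) (U i) := by
  rw [← Fintype.prod_equiv (finCongr (Nat.add_sub_of_le hk)) _ _ (fun _ => rfl),
    Fin.prod_univ_add]
  simp [combine]

lemma combine_mem_omegaSet {N k : ℕ} (hk : k ≤ N) {r : ℝ} {X : Fin k → R3}
    {W : Fin (N - k) → R3} (h : combine hk X W ∈ OmegaSet N r) : W ∈ OmegaSet (N - k) r := by
  intro i j hij
  have h' := h ⟨k + i, by omega⟩ ⟨k + j, by omega⟩ (by simpa [Fin.ext_iff] using hij)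
  simpa [combine] using h'

lemma FinitN_nonneg {f : R3 → R3 → ℝ} (hf : ∀ x v, 0 ≤ f x v) {N : ℕ} {r : ℝ}
    (hZ : 0 ≤ ZN f N r) (X V : Fin N → R3) : 0 ≤ FinitN f N r X V :=
  mul_nonneg (mul_nonneg (inv_nonneg.2 hZ) (Set.indicator_nonneg (fun _ _ => zero_le_one) _))
    (Finset.prod_nonneg fun _ _ => hf _ _)

lemma FinitN_combine_le {f : R3 → R3 → ℝ} (hf : ∀ x v, 0 ≤ f x v) {N k : ℕ} (hk : k ≤ N) {r : ℝ}
    (hZ : 0 ≤ ZN f N r) (X V : Fin k → R3) (W U : Fin (N - k) → R3) :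
    FinitN f N r (combine hk X W) (combine hk V U) ≤
      ((ZN f N r)⁻¹ * ∏ i, f (X i) (V i)) *
        ((OmegaSet (N - k) r).indicator (fun _ => (1 : ℝ)) W * ∏ i, f (W i) (U i)) := by
  have hind : (OmegaSet N r).indicator (fun _ => (1 : ℝ)) (combine hk X W) ≤
      (OmegaSet (N - k) r).indicator (fun _ => (1 : ℝ)) W := by
    by_cases h : combine hk X W ∈ OmegaSet N r
    · simp [h, combine_mem_omegaSet hk h]
    · rw [Set.indicator_of_notMem h]
      exact Set.indicator_nonneg (fun _ _ => zero_le_one) _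
  rw [FinitN, prod_combine, mul_mul_mul_comm, mul_assoc, mul_assoc]
  have h₁ : 0 ≤ ∏ i, f (X i) (V i) := Finset.prod_nonneg fun i _ => hf _ _
  have h₂ : 0 ≤ ∏ i, f (W i) (U i) := Finset.prod_nonneg fun i _ => hf _ _
  gcongr

/-- The marginal of order `k` is bounded by `2 ^ k ∏ f(x_i,v_i)` as soon as removing `k` particles
enlarges the partition function by a factor at most `2 ^ k`. -/
lemma abs_marginal_le {f : R3 → R3 → ℝ} (hf_cont : Continuous (Function.uncurry f))
    (hf : ∀ x v, 0 ≤ f x v)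
    (hg1 : ∫⁻ z : R3 × R3, ENNReal.ofReal (f z.1 z.2) = 1) {N k : ℕ} (hk : k ≤ N) {r : ℝ}
    (hZ : 0 < ZN f N r)
    (hZk : partitionFunction (fun z => ENNReal.ofReal (f z.1 z.2)) r (N - k) ≤
      2 ^ k * partitionFunction (fun z => ENNReal.ofReal (f z.1 z.2)) r N)
    (X V : Fin k → R3) :
    |marginal N k hk (FinitN f N r) X V| ≤ 2 ^ k * ∏ i, f (X i) (V i) := by
  have hg : Measurable fun z : R3 × R3 => ENNReal.ofReal (f z.1 z.2) :=
    (ENNReal.continuous_ofReal.comp hf_cont).measurable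
  have hP : 0 ≤ ∏ i, f (X i) (V i) := Finset.prod_nonneg fun i _ => hf _ _
  have hc : 0 ≤ (ZN f N r)⁻¹ * ∏ i, f (X i) (V i) := mul_nonneg (inv_nonneg.2 hZ.le) hP
  rw [← ofReal_ZN hf_cont hf hg1 N r] at hZk
  rw [← ENNReal.ofReal_le_ofReal_iff (by positivity), ← Real.enorm_eq_ofReal_abs]
  calc ‖marginal N k hk (FinitN f N r) X V‖ₑ
      ≤ ∫⁻ W : (Fin (N - k) → R3) × (Fin (N - k) → R3),
          ‖FinitN f N r (combine hk X W.1) (combine hk V W.2)‖ₑ :=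
        enorm_integral_le_lintegral_enorm _
    _ ≤ ∫⁻ W : (Fin (N - k) → R3) × (Fin (N - k) → R3),
          ENNReal.ofReal ((ZN f N r)⁻¹ * ∏ i, f (X i) (V i)) *
            hardSphereWeight (fun z => ENNReal.ofReal (f z.1 z.2)) r (N - k)
              (fun i => (W.1 i, W.2 i)) := by
        refine lintegral_mono fun W => ?_
        rw [Real.enorm_of_nonneg (FinitN_nonneg hf hZ.le _ _), ← ofReal_indicator_mul_prod hf,
          ← ENNReal.ofReal_mul hc]
        exact ENNReal.ofReal_le_ofReal (FinitN_combine_le hf hk hZ.le X V W.1 W.2)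
    _ = ENNReal.ofReal ((ZN f N r)⁻¹ * ∏ i, f (X i) (V i)) *
          partitionFunction (fun z => ENNReal.ofReal (f z.1 z.2)) r (N - k) := by
        rw [lintegral_const_mul' _ _ ENNReal.ofReal_ne_top, lintegral_hardSphereWeight_prod hg]
    _ ≤ ENNReal.ofReal ((ZN f N r)⁻¹ * ∏ i, f (X i) (V i)) *
          (2 ^ k * ENNReal.ofReal (ZN f N r)) := by gcongr
    _ = ENNReal.ofReal (2 ^ k * ∏ i, f (X i) (V i)) := by
        rw [show (2 : ℝ≥0∞) ^ k = ENNReal.ofReal (2 ^ k) by simp [ENNReal.ofReal_pow],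
          ← ENNReal.ofReal_mul (by positivity), ← ENNReal.ofReal_mul hc]
        congr 1
        field_simp

lemma integrable_exp_neg_sub_mul_sq {β : ℝ} (hβ : 0 < β) (μ : ℝ) :
    Integrable fun v : R3 => exp (-μ - β * ‖v‖ ^ 2 / 2) := by
  have h : Integrable fun v : R3 => exp (-(β / 2) * ‖v‖ ^ 2) := by
    by_contra hn
    have h₁ := GaussianFourier.integral_rexp_neg_mul_sq_norm (V := R3) (half_pos hβ)
    rw [integral_undef hn] at h₁
    have : 0 < (π / (β / 2)) ^ (Module.finrank ℝ R3 / 2 : ℝ) := by positivity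
    exact this.ne h₁
  refine (h.const_mul (exp (-μ))).congr (.of_forall fun v => ?_)
  simp only [← exp_add]
  congr 1
  ring

lemma setLIntegral_closedBall_prod_univ_le {f : R3 → R3 → ℝ} {h : R3 → ℝ}
    (hh : Continuous h) (hfh : ∀ x v, f x v ≤ h v) (y : R3) (s : ℝ) :
    ∫⁻ z in Metric.closedBall y s ×ˢ Set.univ, ENNReal.ofReal (f z.1 z.2) ≤
      volume (Metric.closedBall y s) * ∫⁻ v, ENNReal.ofReal (h v) := by
  calc ∫⁻ z in Metric.closedBall y s ×ˢ Set.univ, ENNReal.ofReal (f z.1 z.2)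
      ≤ ∫⁻ z in Metric.closedBall y s ×ˢ Set.univ, ENNReal.ofReal (h z.2) :=
        lintegral_mono fun z => ENNReal.ofReal_le_ofReal (hfh _ _)
    _ = ∫⁻ _ in Metric.closedBall y s, ∫⁻ v, ENNReal.ofReal (h v) := by
        rw [Measure.volume_eq_prod, ← Measure.prod_restrict, Measure.restrict_univ,
          lintegral_prod _ (by fun_prop)]
    _ = _ := by rw [setLIntegral_const, mul_comm]

/-- The total mass excluded by `N` spheres of Boltzmann–Grad radius tends to zero. -/
lemma exists_forall_excluded_mass_le {γ : ℝ} (hγ : 0 < γ) {G : ℝ≥0∞} (hG : G ≠ ⊤) :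
    ∃ N₀ : ℕ, 1 ≤ N₀ ∧ ∀ N, N₀ ≤ N →
      N * (volume (Metric.closedBall (0 : R3) (2 * rBG γ N)) * G) ≤ 2⁻¹ := by
  set K : ℝ≥0∞ := volume (Metric.ball (0 : R3) 1) * G with hK
  have hKtop : K ≠ ⊤ := ENNReal.mul_ne_top measure_ball_lt_top.ne hG
  have hlim : Filter.Tendsto (fun N : ℕ => γ * √(γ / N) * K.toReal) Filter.atTop (nhds 0) := by
    have h := ((Real.continuous_sqrt.tendsto 0).comp
      (tendsto_const_div_atTop_nhds_zero_nat γ)).const_mul γ |>.mul_const K.toReal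
    simpa using h
  obtain ⟨n, hn⟩ := Filter.eventually_atTop.1
    (hlim.eventually (ge_mem_nhds (show (0 : ℝ) < 2⁻¹ by norm_num)))
  refine ⟨max n 1, le_max_right _ _, fun N hN => ?_⟩
  have hN0 : (0 : ℝ) < N := by exact_mod_cast (le_max_right n 1).trans hN
  have hr : 2 * rBG γ N = √(γ / N) := by rw [rBG]; ring
  have hcube : (N : ℝ) * √(γ / N) ^ 3 = γ * √(γ / N) := by
    rw [pow_succ, Real.sq_sqrt (by positivity)]
    field_simp
  have hle := hn N ((le_max_left n 1).trans hN)
  rw [hr, Measure.addHaar_closedBall _ _ (Real.sqrt_nonneg _), mul_assoc, ← hK, ← mul_assoc,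
    finrank_euclideanSpace_fin, ← ENNReal.ofReal_natCast, ← ENNReal.ofReal_mul hN0.le, hcube,
    ← ENNReal.ofReal_toReal hKtop, ← ENNReal.ofReal_mul (by positivity)]
  calc ENNReal.ofReal (γ * √(γ / N) * K.toReal) ≤ ENNReal.ofReal 2⁻¹ :=
        ENNReal.ofReal_le_ofReal hle
    _ = 2⁻¹ := by rw [ENNReal.ofReal_inv_of_pos two_pos]; simp

lemma wnorm_le {k : ℕ} {β c : ℝ} {g : (Fin k → R3) → (Fin k → R3) → ℝ}
    (hg : ∀ X V, |g X V| ≤ c * exp (-(β * (∑ j, ‖V j‖ ^ 2) / 2))) :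
    wnorm k β g ≤ ENNReal.ofReal c := by
  refine essSup_le_of_ae_le _ (.of_forall fun Z => ENNReal.ofReal_le_ofReal ?_)
  calc |g Z.1 Z.2| * exp (β * (∑ j, ‖Z.2 j‖ ^ 2) / 2)
      ≤ c * exp (-(β * (∑ j, ‖Z.2 j‖ ^ 2) / 2)) * exp (β * (∑ j, ‖Z.2 j‖ ^ 2) / 2) := by
        gcongr
        exact hg _ _
    _ = c := by rw [mul_assoc, ← exp_add, neg_add_cancel, exp_zero, mul_one]

lemma prod_le_exp {β μ : ℝ} {f : R3 → R3 → ℝ}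
    (hf : ∀ x v : R3, 0 ≤ f x v ∧ f x v ≤ exp (-μ - β * ‖v‖ ^ 2 / 2)) {k : ℕ}
    (X V : Fin k → R3) :
    ∏ i, f (X i) (V i) ≤ exp (-μ * k) * exp (-(β * (∑ j, ‖V j‖ ^ 2) / 2)) := by
  calc ∏ i, f (X i) (V i) ≤ ∏ i, exp (-μ - β * ‖V i‖ ^ 2 / 2) :=
        Finset.prod_le_prod (fun i _ => (hf _ _).1) fun i _ => (hf _ _).2
    _ = _ := by
        rw [← exp_sum, ← exp_add, Finset.sum_sub_distrib, ← Finset.sum_div, ← Finset.mul_sum]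
        congr 1
        simp
        ring

/-- Uniform weighted bound for the marginals of admissible hard-sphere initial data in the
Boltzmann–Grad scaling `N(2r)² = γ`. -/
theorem marginals_uniform_weighted_bound (β₀ μ₀ γ : ℝ) (hβ₀ : 0 < β₀) (hγ : 0 < γ)
    (f : R3 → R3 → ℝ) (hf_cont : Continuous (Function.uncurry f))
    (hf_bound : ∀ x v : R3, 0 ≤ f x v ∧ f x v ≤ exp (-μ₀ - β₀ * ‖v‖ ^ 2 / 2))
    (hf_norm : (∫ z : R3 × R3, f z.1 z.2) = 1) :
    ∃ N₀ : ℕ, 1 ≤ N₀ ∧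
      (∀ N, N₀ ≤ N → 0 < ZN f N (rBG γ N)) ∧
      ∃ μ₁ : ℝ, μ₁ ≤ μ₀ ∧ ∃ M : ℝ≥0∞, M < ⊤ ∧
        ∀ N, N₀ ≤ N → seqnorm μ₁ β₀ (margFam N (FinitN f N (rBG γ N))) ≤ M := by
  have hf : ∀ x v, 0 ≤ f x v := fun x v => (hf_bound x v).1
  set g : R3 × R3 → ℝ≥0∞ := fun z => ENNReal.ofReal (f z.1 z.2) with hg_def
  have hg : Measurable g := (ENNReal.continuous_ofReal.comp hf_cont).measurable
  have hg1 : ∫⁻ z, g z = 1 := by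
    have hint : Integrable fun z : R3 × R3 => f z.1 z.2 :=
      Integrable.of_integral_ne_zero (by rw [hf_norm]; exact one_ne_zero)
    rw [← ofReal_integral_eq_lintegral_ofReal hint (.of_forall fun z => hf _ _), hf_norm,
      ENNReal.ofReal_one]
  set G : ℝ≥0∞ := ∫⁻ v : R3, ENNReal.ofReal (exp (-μ₀ - β₀ * ‖v‖ ^ 2 / 2)) with hG_def
  have hG : G ≠ ⊤ := (integrable_exp_neg_sub_mul_sq hβ₀ μ₀).lintegral_lt_top.ne
  have hκ (r : ℝ) (y : R3) : ∫⁻ z in Metric.closedBall y (2 * r) ×ˢ Set.univ, g z ≤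
      volume (Metric.closedBall (0 : R3) (2 * r)) * G := by
    rw [← Measure.addHaar_closedBall_center volume y]
    exact setLIntegral_closedBall_prod_univ_le (by fun_prop) (fun x v => (hf_bound x v).2) y _
  obtain ⟨N₀, hN₀, hexcl⟩ := exists_forall_excluded_mass_le hγ hG
  have hratio (N : ℕ) (hN : N₀ ≤ N) (k : ℕ) (hk : k ≤ N) :
      partitionFunction g (rBG γ N) (N - k) ≤ 2 ^ k * partitionFunction g (rBG γ N) N := by
    have h := partitionFunction_le_two_pow_mul_add hg hg1 (hκ (rBG γ N)) (N - k) k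
      (by rw [Nat.sub_add_cancel hk]; exact hexcl N hN)
    rwa [Nat.sub_add_cancel hk] at h
  have hZpos (N : ℕ) (hN : N₀ ≤ N) : 0 < ZN f N (rBG γ N) := by
    rw [← ENNReal.ofReal_pos, ofReal_ZN hf_cont hf hg1, pos_iff_ne_zero]
    intro h0
    have h := hratio N hN N le_rfl
    rw [Nat.sub_self, partitionFunction_zero, h0, mul_zero] at h
    exact absurd h (by simp)
  refine ⟨N₀, hN₀, hZpos, μ₀ - log 2, by linarith [log_pos one_lt_two], 1,
    ENNReal.one_lt_top, fun N hN => iSup_le fun n => ?_⟩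
  have hw : wnorm (n + 1) β₀ (margFam N (FinitN f N (rBG γ N)) (n + 1)) ≤
      ENNReal.ofReal (2 ^ (n + 1) * exp (-μ₀ * (n + 1 : ℕ))) := by
    refine wnorm_le fun X V => ?_
    by_cases hk : n + 1 ≤ N
    · rw [margFam, dif_pos hk, mul_assoc]
      refine (abs_marginal_le hf_cont hf hg1 hk (hZpos N hN) (hratio N hN _ hk) X V).trans ?_
      gcongr
      exact prod_le_exp hf_bound X V
    · rw [margFam, dif_neg hk, abs_zero]
      positivity
  calc _ ≤ ENNReal.ofReal (2 ^ (n + 1) * exp (-μ₀ * (n + 1 : ℕ))) *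
        ENNReal.ofReal (exp ((μ₀ - log 2) * (n + 1))) := by gcongr
    _ = 1 := by
      have h2 : (2 : ℝ) ^ (n + 1) = exp (log 2 * (n + 1 : ℕ)) := by
        rw [exp_mul, exp_log two_pos, rpow_natCast]
      rw [← ENNReal.ofReal_mul (by positivity), h2, ← exp_add, ← exp_add,
        ENNReal.ofReal_eq_one, exp_eq_one_iff]
      push_cast
      ring
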